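/- For every complete nondeterministic register automaton (L, {r}, Σ, T) with a single register over an infinite data domain D that admits a synchronizing data word, there exist a datum x ∈ D and a data word w with data(w) = {x} such that post(L × D, w) ⊆ L × {x}. -/

import Mathlib

open scoped Classical

/-- Register constraints over a set `R` of registers: built from the atom `true` and
atoms `= r` for `r ∈ R` using conjunction and negation. -/
inductive RC (R : Type) : Type
  | tt : RC R
  | req : R → RC R
  | conj : RC R → RC R → RC R
  | neg : RC R → RC R

/-- Satisfaction of a register constraint by a register valuation `ν` and a datum `d`. -/
def RC.sat {R D : Type} (ν : R → D) (d : D) : RC R → Prop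
  | RC.tt => True
  | RC.req r => ν r = d
  | RC.conj φ ψ => RC.sat ν d φ ∧ RC.sat ν d ψ
  | RC.neg φ => ¬ RC.sat ν d φ

/-- A configuration: a location together with a register valuation. -/
abbrev Config (L R D : Type) : Type := L × (R → D)

/-- A transition: source location, letter, guard, update set, target location. -/
abbrev RATrans (L A R : Type) : Type := L × A × RC R × Set R × L

/-- The update `ν[up := d]` of a register valuation. -/
noncomputable def updVal {R D : Type} (ν : R → D) (up : Set R) (d : D) : R → D :=
  fun r => if r ∈ up then d else ν r

/-- One-step successor relation of the register automaton with transition relation `T`: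
`Step T q (a, d) q'` holds iff `q' ∈ post(q, (a, d))`. -/
def Step {L A R D : Type} (T : Set (RATrans L A R)) (q : Config L R D) (i : A × D)
    (q' : Config L R D) : Prop :=
  ∃ (φ : RC R) (up : Set R) (ℓ' : L),
    (q.1, i.1, φ, up, ℓ') ∈ T ∧ RC.sat q.2 i.2 φ ∧ q' = (ℓ', updVal q.2 up i.2)

/-- `post` of a set of configurations on a single input. -/
def postStep {L A R D : Type} (T : Set (RATrans L A R)) (S : Set (Config L R D)) (i : A × D) :
    Set (Config L R D) :=
  {q' | ∃ q ∈ S, Step T q i q'}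

/-- `post` of a set of configurations on a data word. -/
def postWord {L A R D : Type} (T : Set (RATrans L A R)) (S : Set (Config L R D)) :
    List (A × D) → Set (Config L R D)
  | [] => S
  | i :: w => postWord T (postStep T S i) w

/-- Completeness: every configuration has at least one successor on every input. -/
def RAComplete (D : Type) {L A R : Type} (T : Set (RATrans L A R)) : Prop :=
  ∀ (q : Config L R D) (i : A × D), ∃ q', Step T q i q'

/-- Determinism: every configuration has at most one successor on every input. -/
def RADet (D : Type) {L A R : Type} (T : Set (RATrans L A R)) : Prop :=
  ∀ (q : Config L R D) (i : A × D) (q₁ q₂ : Config L R D),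
    Step T q i q₁ → Step T q i q₂ → q₁ = q₂

/-- The set of data values occurring in a data word. -/
def dataSet {A D : Type} (w : List (A × D)) : Set D := {d | ∃ p ∈ w, p.2 = d}

/-- A synchronizing data word: a nonempty data word sending the set of all
configurations to a single configuration. -/
def IsSync (D : Type) {L A R : Type} (T : Set (RATrans L A R)) (w : List (A × D)) : Prop :=
  w ≠ [] ∧ ∃ q : Config L R D, postWord T (Set.univ : Set (Config L R D)) w = {q}

/-!
Take a synchronizing word, replace all its data by `x`, and consider a run on the new word in which
no register holds `x` at the end. Since writes can only store `x`, a register holding `x` at some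
point holds it ever after; so the run writes no register, and every atom `= r` it evaluates is
false. Such a run can be replayed on the original word from any valuation `μ` that avoids the data
of that word, and it ends in `μ`. Synchronization leaves only one possible value for `μ`, although
the infinite domain offers several such valuations.
-/

section Replay

variable {L A R D : Type}

theorem RC.sat_congr {ν μ : R → D} {d e : D} (h : ∀ r, ν r = d ↔ μ r = e) (φ : RC R) :
    RC.sat ν d φ ↔ RC.sat μ e φ := by
  induction φ with
  | tt => exact Iff.rfl
  | req r => exact h r
  | conj φ ψ ihφ ihψ => exact and_congr ihφ ihψ
  | neg φ ih => exact not_congr ih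

theorem updVal_empty (ν : R → D) (d : D) : updVal ν ∅ d = ν :=
  funext fun _ => if_neg (Set.notMem_empty _)

theorem eq_empty_of_forall_updVal_ne {ν : R → D} {up : Set R} {x : D}
    (h : ∀ r, updVal ν up x r ≠ x) : up = ∅ :=
  Set.eq_empty_of_forall_notMem fun r hr => h r (if_pos hr)

/-- The data word obtained from `w` by replacing every datum with `x`. It turns a synchronizing
word into a word over the single datum `x`. -/
def withDatum (w : List (A × D)) (x : D) : List (A × D) :=
  w.map fun p => (p.1, x)

theorem finite_dataSet (w : List (A × D)) : (dataSet w).Finite :=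
  w.finite_toSet.image Prod.snd

theorem dataSet_withDatum {w : List (A × D)} (hw : w ≠ []) (x : D) :
    dataSet (withDatum w x) = {x} := by
  obtain ⟨p, hp⟩ := List.exists_mem_of_ne_nil w hw
  refine Set.eq_singleton_iff_unique_mem.2 ⟨⟨(p.1, x), List.mem_map_of_mem hp, rfl⟩, ?_⟩
  rintro _ ⟨_, hp', rfl⟩
  obtain ⟨_, _, rfl⟩ := List.mem_map.1 hp'
  rfl

variable {T : Set (RATrans L A R)} {x : D} {μ : R → D}

theorem Step.replay_of_forall_ne {q q' : Config L R D} {a : A} {d : D}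
    (hstep : Step T q (a, x) q') (hq' : ∀ r, q'.2 r ≠ x) (hμ : ∀ r, μ r ≠ d) :
    (∀ r, q.2 r ≠ x) ∧ Step T (q.1, μ) (a, d) (q'.1, μ) := by
  obtain ⟨φ, up, ℓ', hT, hsat, rfl⟩ := hstep
  obtain rfl : up = ∅ := eq_empty_of_forall_updVal_ne hq'
  have hq : ∀ r, q.2 r ≠ x := by simpa only [updVal_empty] using hq'
  have hsat' : RC.sat μ d φ := (RC.sat_congr (fun r => iff_of_false (hq r) (hμ r)) φ).1 hsat
  exact ⟨hq, φ, ∅, ℓ', hT, hsat', by simp only [updVal_empty]⟩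

theorem mem_postWord_of_mem_postWord_withDatum {w : List (A × D)} {S S' : Set (Config L R D)}
    (hμ : ∀ r, μ r ∉ dataSet w) (hS : ∀ q ∈ S, (∀ r, q.2 r ≠ x) → (q.1, μ) ∈ S')
    {q : Config L R D} (hmem : q ∈ postWord T S (withDatum w x)) (hq : ∀ r, q.2 r ≠ x) :
    (q.1, μ) ∈ postWord T S' w := by
  induction w generalizing S S' with
  | nil => exact hS q hmem hq
  | cons i w ih =>
    refine ih (fun r ⟨p, hp, hpr⟩ => hμ r ⟨p, List.mem_cons_of_mem i hp, hpr⟩) ?_ hmem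
    rintro q₂ ⟨q₁, hq₁, hstep⟩ hq₂
    have hμi : ∀ r, μ r ≠ i.2 := fun r hr => hμ r ⟨i, List.mem_cons_self, hr.symm⟩
    obtain ⟨hne, hstep'⟩ := hstep.replay_of_forall_ne hq₂ hμi
    exact ⟨(q₁.1, μ), hS q₁ hq₁ hne, hstep'⟩

theorem IsSync.exists_eq_of_mem_postWord_withDatum [Nonempty R] [Infinite D] {w : List (A × D)}
    (hw : IsSync D T w) {q : Config L R D}
    (hq : q ∈ postWord T Set.univ (withDatum w x)) : ∃ r, q.2 r = x := by
  obtain ⟨-, q₀, hq₀⟩ := hw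
  obtain ⟨r₀⟩ : Nonempty R := inferInstance
  obtain ⟨y, hy⟩ := ((finite_dataSet w).insert (q₀.2 r₀)).exists_notMem
  obtain ⟨hyq₀, hyw⟩ : y ≠ q₀.2 r₀ ∧ y ∉ dataSet w := by
    simpa only [Set.mem_insert_iff, not_or] using hy
  by_contra! hne
  have hreplay : (q.1, fun _ => y) ∈ postWord T Set.univ w :=
    mem_postWord_of_mem_postWord_withDatum (fun _ => hyw) (fun _ _ _ => Set.mem_univ _) hq hne
  have heq : (q.1, fun _ => y) = q₀ := by rwa [hq₀] at hreplay
  exact hyq₀ (congrFun (congrArg Prod.snd heq) r₀)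

end Replay

theorem stmt13_general {L A R D : Type} [Nonempty R] [Infinite D] (T : Set (RATrans L A R))
    (hsync : ∃ w : List (A × D), IsSync D T w) (x : D) :
    ∃ w : List (A × D), dataSet w = {x} ∧
      postWord T (Set.univ : Set (Config L R D)) w ⊆ {q : Config L R D | ∃ r, q.2 r = x} := by
  obtain ⟨w, hw⟩ := hsync
  exact ⟨withDatum w x, dataSet_withDatum hw.1 x,
    fun _ hq => hw.exists_eq_of_mem_postWord_withDatum hq⟩

/-- every complete 1-NRA over an infinite data domain that admits a
synchronizing data word also admits a datum `x` and a data word `w` with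
`data(w) = {x}` such that `post(L × D, w) ⊆ L × {x}`. -/
theorem stmt13 {L A D : Type} [Fintype L] [Fintype A] [Infinite D]
    (T : Set (RATrans L A Unit))
    (hcomp : RAComplete D T)
    (hsync : ∃ w : List (A × D), IsSync D T w) :
    ∃ (x : D) (w : List (A × D)), dataSet w = {x} ∧
      postWord T (Set.univ : Set (Config L Unit D)) w ⊆
        {q : Config L Unit D | q.2 () = x} := by
  obtain ⟨x⟩ : Nonempty D := inferInstance
  obtain ⟨w, hdata, hpost⟩ := stmt13_general T hsync x
  exact ⟨x, w, hdata, fun _ hq => (hpost hq).elim fun _ h => h⟩
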